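/- arXiv:1910.00826 — 2 statements merged into one kernel-verified Lean document; each statement's English description precedes it below -/
import Mathlib

section
/- A word w is rich if and only if every suffix p of w has a palindromic prefix occurring exactly once in p. -/
def Rich {A : Type*} (w : List A) : Prop :=
  {p : List A | p.reverse = p ∧ p <:+: w}.ncard = w.length + 1
def occ {A : Type*} [DecidableEq A] (u v : List A) : ℕ :=
  ((List.range (u.length + 1)).filter (fun i => v.isPrefixOf (u.drop i))).length

/-!
Prepending a letter to `w` creates at most one new palindromic factor: of two palindromic prefixes
of `a :: w`, the shorter is also a suffix of the longer and therefore already occurs in `w`. Hence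
a word of length `n` has at most `n + 1` palindromic factors, with equality iff every letter, read
from right to left, contributes a new palindrome, and a palindromic prefix of `a :: w` is new
precisely when it is unioccurrent in `a :: w`.
-/

section Palindromes

variable {A : Type*} {a : A} {w s t : List A}

theorem suffix_of_prefix_of_reverse_eq (hs : s.reverse = s) (ht : t.reverse = t)
    (h : s <+: t) : s <:+ t := by
  rw [← hs, ← ht]
  exact List.reverse_suffix.2 h

theorem suffix_tail_of_suffix_of_ne (h : s <:+ t) (hne : s ≠ t) : s <:+ t.tail := by
  cases t with
  | nil => exact h
  | cons b t => exact (List.suffix_cons_iff.1 h).resolve_left hne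

theorem tail_prefix_of_prefix_cons (h : t <+: a :: w) : t.tail <+: w := by
  cases t with
  | nil => exact List.nil_prefix
  | cons b t => exact (List.cons_prefix_cons.1 h).2

theorem infix_of_prefix_of_reverse_eq (hs : s.reverse = s) (ht : t.reverse = t)
    (hst : s <+: t) (hne : s ≠ t) (htw : t <+: a :: w) : s <:+: w :=
  have s_suffix_tail : s <:+ t.tail :=
    suffix_tail_of_suffix_of_ne (suffix_of_prefix_of_reverse_eq hs ht hst) hne
  have tail_prefix : t.tail <+: w := tail_prefix_of_prefix_cons htw
  s_suffix_tail.isInfix.trans tail_prefix.isInfix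

/-- The set of palindromic factors of a word, including the empty one; `Rich w` says that it has
`w.length + 1` elements. Palindromes are encoded by `p.reverse = p`, as in `Rich`. -/
def palFactors (w : List A) : Set (List A) :=
  {p | p.reverse = p ∧ p <:+: w}

/-- The palindromic factors gained by prepending the letter `a` to the word `w`. They are encoded
as prefixes of `a :: w` because a factor of `a :: w` absent from `w` can only occur at the front. -/
def newPals (a : A) (w : List A) : Set (List A) :=
  {s | s.reverse = s ∧ s <+: a :: w ∧ ¬ s <:+: w}

theorem newPals_subsingleton (a : A) (w : List A) : (newPals a w).Subsingleton := by
  rintro s ⟨hs, hsp, hsn⟩ t ⟨ht, htp, htn⟩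
  by_contra hne
  rcases List.prefix_or_prefix_of_prefix hsp htp with hst | hts
  · exact hsn (infix_of_prefix_of_reverse_eq hs ht hst hne htp)
  · exact htn (infix_of_prefix_of_reverse_eq ht hs hts (Ne.symm hne) hsp)

theorem newPals_finite (a : A) (w : List A) : (newPals a w).Finite :=
  (newPals_subsingleton a w).finite

theorem ncard_newPals_le_one (a : A) (w : List A) : (newPals a w).ncard ≤ 1 :=
  (Set.ncard_le_one_iff (newPals_finite a w)).2 fun hs ht => newPals_subsingleton a w hs ht

theorem palFactors_finite (w : List A) : (palFactors w).Finite :=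
  w.sublists.finite_toSet.subset fun _ hp => List.mem_sublists.2 hp.2.sublist

theorem palFactors_nil : palFactors ([] : List A) = {[]} := by
  ext s
  simp +contextual [palFactors]

theorem palFactors_cons (a : A) (w : List A) :
    palFactors (a :: w) = palFactors w ∪ newPals a w := by
  ext s
  simp only [palFactors, newPals, Set.mem_union, Set.mem_ofPred_eq, List.infix_cons_iff]
  tauto

theorem disjoint_palFactors_newPals (a : A) (w : List A) :
    Disjoint (palFactors w) (newPals a w) :=
  Set.disjoint_left.2 fun _ hs hs' => hs'.2.2 hs.2

theorem ncard_palFactors_cons (a : A) (w : List A) :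
    (palFactors (a :: w)).ncard = (palFactors w).ncard + (newPals a w).ncard := by
  rw [palFactors_cons, Set.ncard_union_eq (disjoint_palFactors_newPals a w)
    (palFactors_finite w) (newPals_finite a w)]

theorem ncard_palFactors_le (w : List A) : (palFactors w).ncard ≤ w.length + 1 := by
  induction w with
  | nil => simp [palFactors_nil]
  | cons a w ih =>
    rw [ncard_palFactors_cons, List.length_cons]
    exact Nat.add_le_add ih (ncard_newPals_le_one a w)

theorem rich_iff_ncard_palFactors : Rich w ↔ (palFactors w).ncard = w.length + 1 :=
  Iff.rfl

theorem rich_nil : Rich ([] : List A) := by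
  simp [rich_iff_ncard_palFactors, palFactors_nil]

theorem rich_cons_iff : Rich (a :: w) ↔ (newPals a w).Nonempty ∧ Rich w := by
  rw [rich_iff_ncard_palFactors, rich_iff_ncard_palFactors, ncard_palFactors_cons,
    List.length_cons, ← Set.ncard_pos (newPals_finite a w)]
  have new_le := ncard_newPals_le_one a w
  have old_le := ncard_palFactors_le w
  omega

end Palindromes

section Occurrences

variable {A : Type*} [DecidableEq A] {a : A} {w s : List A}

theorem occ_nil_nil : occ ([] : List A) [] = 1 := rfl

theorem occ_cons (a : A) (w s : List A) :
    occ (a :: w) s = (if s <+: a :: w then 1 else 0) + occ w s := by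
  unfold occ
  rw [List.length_cons, List.range_succ_eq_map, List.filter_cons, List.filter_map,
    List.drop_zero]
  simp only [List.isPrefixOf_iff_prefix]
  split_ifs <;> simp [Function.comp_def, add_comm]

theorem occ_eq_zero_iff : occ w s = 0 ↔ ¬ s <:+: w := by
  induction w with
  | nil => cases s <;> simp [occ]
  | cons a w ih =>
    rw [occ_cons, List.infix_cons_iff, Nat.add_eq_zero_iff, ih, not_or]
    simp

theorem occ_cons_eq_one_iff (h : s <+: a :: w) : occ (a :: w) s = 1 ↔ ¬ s <:+: w := by
  rw [occ_cons, if_pos h, Nat.add_eq_left, occ_eq_zero_iff]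

theorem newPals_nonempty_iff :
    (newPals a w).Nonempty ↔
      ∃ s : List A, s <+: a :: w ∧ s.reverse = s ∧ occ (a :: w) s = 1 :=
  ⟨fun ⟨s, hs, hp, hn⟩ => ⟨s, hp, hs, (occ_cons_eq_one_iff hp).2 hn⟩,
    fun ⟨s, hp, hs, ho⟩ => ⟨s, hs, hp, (occ_cons_eq_one_iff hp).1 ho⟩⟩

end Occurrences

theorem stmt4 {A : Type*} [DecidableEq A] (w : List A) :
    Rich w ↔ ∀ p : List A, p <:+ w →
      ∃ s : List A, s <+: p ∧ s.reverse = s ∧ occ p s = 1 := by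
  induction w with
  | nil =>
    simp only [List.suffix_nil, forall_eq]
    exact iff_of_true rich_nil ⟨[], List.nil_prefix, rfl, occ_nil_nil⟩
  | cons a w ih =>
    simp only [rich_cons_iff, newPals_nonempty_iff, ih, List.suffix_cons_iff, or_imp,
      forall_and, forall_eq]
end

section
/- If w is a nonempty rich word and x is the letter such that x·lpps(w) is a suffix of w, where lpps(w) is the longest proper palindromic suffix of w, then wx is rich. -/
/-!
Appending a letter to `w` creates at most one new palindromic factor: such a factor is a suffix of
`w ++ [x]`, and of two palindromic suffixes the shorter is also a prefix of the longer, so it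
already occurs in `w`. Hence `w` has at most `w.length + 1` palindromic factors, and `w ++ [x]` is
rich exactly when `w` is rich and some palindromic suffix of `w ++ [x]` does not occur in `w`.

With `p = lpps(w)`, the new palindrome is `x p x`. If it occurred in `w = a v`, then `p` would
occur in `v` with its last letter removed. But `v` is rich, being a factor of `w`, and `p` is the
longest palindromic suffix of `v`, so `p` occurs only once in `v`.
-/

section Words

variable {A : Type*} {u v w p q : List A} {x : A}

theorem infix_tail_of_cons_infix (h : x :: q <:+: w) : q <:+: w.tail := by
  obtain ⟨_ | ⟨b, s⟩, t, rfl⟩ := h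
  · exact (List.prefix_append q t).isInfix
  · exact ⟨s ++ [x], t, by simp⟩

theorem infix_dropLast_of_concat_infix (h : q ++ [x] <:+: w) : q <:+: w.dropLast := by
  have hrev : x :: q.reverse <:+: w.reverse := by simpa using h.reverse
  simpa [List.tail_reverse] using (infix_tail_of_cons_infix hrev).reverse

theorem suffix_tail_iff (hw : w ≠ []) : q <:+ w.tail ↔ q <:+ w ∧ q ≠ w := by
  refine ⟨fun h => ⟨h.trans w.tail_suffix, ?_⟩, fun ⟨h, hne⟩ => ?_⟩
  · rintro rfl
    have hlen : q.length ≤ q.length - 1 := List.length_tail ▸ h.length_le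
    have hpos : 0 < q.length := List.length_pos_of_ne_nil hw
    omega
  · obtain ⟨a, v, rfl⟩ := List.exists_cons_of_ne_nil hw
    exact (List.suffix_cons_iff.1 h).resolve_left hne

theorem infix_of_palindromic_suffixes_of_length_lt (hp : p.reverse = p) (hq : q.reverse = q)
    (hpw : p <:+ w ++ [x]) (hqw : q <:+ w ++ [x]) (hlt : p.length < q.length) : p <:+: w := by
  have hpq : p <+: q := by
    simpa only [hp, hq] using (List.suffix_of_suffix_length_le hpw hqw hlt.le).reverse
  rcases List.suffix_concat_iff.1 hqw with rfl | ⟨t, rfl, htw⟩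
  · simp at hlt
  · rcases List.prefix_concat_iff.1 hpq with rfl | hpt
    · exact absurd hlt (lt_irrefl _)
    · exact hpt.isInfix.trans htw.isInfix

/-- The set of palindromes occurring in `w` as contiguous factors, the empty word included;
`Rich w` says that it has `w.length + 1` elements. -/
def palindromicFactors (w : List A) : Set (List A) :=
  {p | p.reverse = p ∧ p <:+: w}

theorem rich_iff : Rich w ↔ (palindromicFactors w).ncard = w.length + 1 :=
  Iff.rfl

theorem finite_palindromicFactors (w : List A) : (palindromicFactors w).Finite :=
  (List.finite_toSet w.sublists).subset fun _ hp => List.mem_sublists.2 hp.2.sublist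

theorem palindromicFactors_nil : palindromicFactors ([] : List A) = {[]} := by
  ext p
  simpa [palindromicFactors] using fun h : p = [] => h ▸ List.reverse_nil

theorem palindromicFactors_mono (h : u <:+: w) : palindromicFactors u ⊆ palindromicFactors w :=
  fun _ hp => ⟨hp.1, hp.2.trans h⟩

theorem palindromicFactors_reverse (w : List A) :
    palindromicFactors w.reverse = palindromicFactors w := by
  ext p
  refine and_congr_right fun hp => ?_
  rw [← List.reverse_infix, hp, List.reverse_reverse]

theorem mem_palindromicFactors_concat_sdiff :
    p ∈ palindromicFactors (w ++ [x]) \ palindromicFactors w ↔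
      p.reverse = p ∧ p <:+ w ++ [x] ∧ ¬ p <:+: w := by
  simp only [palindromicFactors, Set.mem_sdiff, Set.mem_ofPred_eq, List.infix_concat_iff]
  tauto

theorem subsingleton_palindromicFactors_concat_sdiff (w : List A) (x : A) :
    (palindromicFactors (w ++ [x]) \ palindromicFactors w).Subsingleton := by
  intro p hp q hq
  obtain ⟨hp, hpw, hp_new⟩ := mem_palindromicFactors_concat_sdiff.1 hp
  obtain ⟨hq, hqw, hq_new⟩ := mem_palindromicFactors_concat_sdiff.1 hq
  rcases lt_trichotomy p.length q.length with hlt | heq | hgt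
  · exact absurd (infix_of_palindromic_suffixes_of_length_lt hp hq hpw hqw hlt) hp_new
  · exact (List.suffix_of_suffix_length_le hpw hqw heq.le).eq_of_length heq
  · exact absurd (infix_of_palindromic_suffixes_of_length_lt hq hp hqw hpw hgt) hq_new

theorem ncard_palindromicFactors_concat_sdiff_le_one (w : List A) (x : A) :
    (palindromicFactors (w ++ [x]) \ palindromicFactors w).ncard ≤ 1 :=
  (Set.ncard_le_one (finite_palindromicFactors _).sdiff).2 fun _ hp _ hq =>
    subsingleton_palindromicFactors_concat_sdiff w x hp hq

theorem ncard_palindromicFactors_concat (w : List A) (x : A) :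
    (palindromicFactors (w ++ [x])).ncard =
      (palindromicFactors (w ++ [x]) \ palindromicFactors w).ncard +
        (palindromicFactors w).ncard :=
  (Set.ncard_sdiff_add_ncard_of_subset
    (palindromicFactors_mono (List.prefix_append w [x]).isInfix)
    (finite_palindromicFactors _)).symm

theorem ncard_palindromicFactors_le (w : List A) :
    (palindromicFactors w).ncard ≤ w.length + 1 := by
  induction w using List.reverseRecOn with
  | nil => simp [palindromicFactors_nil]
  | append_singleton w x ih =>
    rw [ncard_palindromicFactors_concat, List.length_append, List.length_singleton]
    have := ncard_palindromicFactors_concat_sdiff_le_one w x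
    omega

theorem rich_concat_iff :
    Rich (w ++ [x]) ↔ Rich w ∧ ∃ q, q.reverse = q ∧ q <:+ w ++ [x] ∧ ¬ q <:+: w := by
  simp only [← mem_palindromicFactors_concat_sdiff]
  rw [← Set.Nonempty, ← Set.ncard_pos (finite_palindromicFactors _).sdiff, rich_iff, rich_iff,
    ncard_palindromicFactors_concat, List.length_append, List.length_singleton]
  have := ncard_palindromicFactors_le w
  have := ncard_palindromicFactors_concat_sdiff_le_one w x
  omega

theorem Rich.reverse (h : Rich w) : Rich w.reverse := by
  rwa [rich_iff, palindromicFactors_reverse, List.length_reverse]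

theorem Rich.of_append_left (h : Rich (u ++ v)) : Rich u := by
  induction v using List.reverseRecOn with
  | nil => simpa using h
  | append_singleton v x ih =>
    rw [← List.append_assoc] at h
    exact ih (rich_concat_iff.1 h).1

theorem Rich.of_append_right (h : Rich (u ++ v)) : Rich v := by
  have hrev : Rich (v.reverse ++ u.reverse) := by simpa using h.reverse
  simpa using hrev.of_append_left.reverse

theorem Rich.of_infix (h : Rich w) (huw : u <:+: w) : Rich u := by
  obtain ⟨s, t, rfl⟩ := huw
  exact h.of_append_left.of_append_right

/-- `q` is the longest palindromic suffix of `w`. The suffix `w` itself is allowed, so that for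
nonempty `w` the paper's `lpps(w)` is the longest palindromic suffix of `w.tail`. -/
structure IsLongestPalindromicSuffix (q w : List A) : Prop where
  reverse_eq : q.reverse = q
  suffix : q <:+ w
  length_le : ∀ r : List A, r.reverse = r → r <:+ w → r.length ≤ q.length

theorem Rich.not_infix_dropLast_of_isLongestPalindromicSuffix (h : Rich w) (hw : w ≠ [])
    (hq : IsLongestPalindromicSuffix q w) : ¬ q <:+: w.dropLast := by
  obtain ⟨u, x, rfl⟩ := (List.eq_nil_or_concat' w).resolve_left hw
  rw [List.dropLast_concat]
  obtain ⟨-, r, hr, hru, hr_new⟩ := rich_concat_iff.1 h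
  rcases (hq.length_le r hr hru).lt_or_eq with hlt | heq
  · exact absurd
      (infix_of_palindromic_suffixes_of_length_lt hr hq.reverse_eq hru hq.suffix hlt) hr_new
  · obtain rfl : r = q :=
      (List.suffix_of_suffix_length_le hru hq.suffix heq.le).eq_of_length heq
    exact hr_new

end Words

theorem stmt5 {A : Type*} (w p : List A) (x : A)
    (hw : Rich w) (hne : w ≠ [])
    (hpal : p.reverse = p) (hsuf : p <:+ w) (hproper : p ≠ w)
    (hlongest : ∀ q : List A, q.reverse = q → q <:+ w → q ≠ w → q.length ≤ p.length)
    (hx : (x :: p) <:+ w) :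
    Rich (w ++ [x]) := by
  have hlps : IsLongestPalindromicSuffix p w.tail :=
    ⟨hpal, (suffix_tail_iff hne).2 ⟨hsuf, hproper⟩, fun r hr hrw =>
      have ⟨hrw, hrne⟩ := (suffix_tail_iff hne).1 hrw
      hlongest r hr hrw hrne⟩
  have hxpx_suffix : x :: (p ++ [x]) <:+ w ++ [x] := by
    obtain ⟨s, rfl⟩ := hx
    exact ⟨s, by simp⟩
  have hxpx_new : ¬ x :: (p ++ [x]) <:+: w := fun hxpx => by
    have hpx : p ++ [x] <:+: w.tail := infix_tail_of_cons_infix hxpx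
    have htail : w.tail ≠ [] := fun h => by simp [h] at hpx
    exact (hw.of_infix w.tail_suffix.isInfix).not_infix_dropLast_of_isLongestPalindromicSuffix
      htail hlps (infix_dropLast_of_concat_infix hpx)
  exact rich_concat_iff.2 ⟨hw, x :: (p ++ [x]), by simp [hpal], hxpx_suffix, hxpx_new⟩
end
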